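/- Let Φ be a reduced crystallographic root system with base Δ = {α_1, …, α_r}, positive roots Φ⁺, and Weyl vector ρ. Let μ be a dominant integral weight, let γ ∈ Φ, and suppose α_j ∈ Δ satisfies ⟨ρ + μ + γ, α_j∨⟩ < 0; set p := −⟨ρ + μ + γ, α_j∨⟩. Then β := γ + p·α_j is either zero or a root of Φ. -/

import Mathlib

open scoped Classical RealInnerProductSpace

namespace RootPaper

variable {E : Type} [NormedAddCommGroup E] [InnerProductSpace ℝ E] [FiniteDimensional ℝ E]

/-- The Cartan pairing `⟨β, α∨⟩ = 2⟨β, α⟩/⟨α, α⟩`. -/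
noncomputable def cpair (β α : E) : ℝ := 2 * ⟪β, α⟫ / ⟪α, α⟫

/-- `Φ` is a reduced crystallographic root system in the real inner product space `E`. -/
structure IsRootSystem (Φ : Finset E) : Prop where
  nonzero : ∀ α ∈ Φ, α ≠ 0
  span : Submodule.span ℝ (Φ : Set E) = ⊤
  reduced : ∀ α ∈ Φ, ∀ t : ℝ, t • α ∈ Φ → t = 1 ∨ t = -1
  reflection_mem : ∀ α ∈ Φ, ∀ β ∈ Φ, β - cpair β α • α ∈ Φ
  crystallographic : ∀ α ∈ Φ, ∀ β ∈ Φ, ∃ n : ℤ, cpair β α = (n : ℝ)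

/-- `Δ` is a base (set of simple roots) of the root system `Φ`: a linearly independent
subset such that every root is a non-negative or non-positive integral combination of
elements of `Δ`. -/
structure IsBase (Φ Δ : Finset E) : Prop where
  subset : (Δ : Set E) ⊆ (Φ : Set E)
  indep : LinearIndependent ℝ (fun a : {x : E // x ∈ Δ} => (a : E))
  pos_neg : ∀ β ∈ Φ, (∃ c : E → ℕ, β = ∑ a ∈ Δ, (c a : ℝ) • a) ∨
    (∃ c : E → ℕ, β = -∑ a ∈ Δ, (c a : ℝ) • a)

/-- The positive roots of `Φ` relative to the base `Δ`. -/
noncomputable def posRoots (Φ Δ : Finset E) : Finset E :=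
  Φ.filter fun β => ∃ c : E → ℕ, β = ∑ a ∈ Δ, (c a : ℝ) • a

/-- The Weyl vector `ρ`, half the sum of the positive roots. -/
noncomputable def weylVector (Φ Δ : Finset E) : E := (2⁻¹ : ℝ) • ∑ β ∈ posRoots Φ Δ, β

/-!
Root strings are unbroken: for roots `α`, `γ` and an integer `0 ≤ p ≤ -⟨γ, α∨⟩`, the vector
`γ + p • α` is a root or zero. Indeed `⟨γ, α∨⟩ < 0` forces `γ + α` to be a root or zero, because
`⟨γ, α∨⟩⟨α, γ∨⟩ ≤ 4` leaves only the cases where one of the two pairings is `-1`, or both are `-2`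
and `γ = -α`. Iterating this reaches the middle of the string, and the reflection in `α`
exchanges its two halves.

It remains to see that `⟨ρ + μ, α∨⟩ ≥ 0` is an integer when `α` is simple. The reflection in `α`
permutes the positive roots that are not multiples of `α`, so their pairings with `α∨` cancel,
while a positive root `n • α` contributes `n` to `⟨ρ, α∨⟩`.
-/

section

variable {V : Type} [NormedAddCommGroup V] [InnerProductSpace ℝ V]

theorem cpair_add_left (x y α : V) : cpair (x + y) α = cpair x α + cpair y α := by
  simp only [cpair, inner_add_left]
  ring

theorem cpair_smul_left (t : ℝ) (x α : V) : cpair (t • x) α = t * cpair x α := by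
  simp only [cpair, real_inner_smul_left]
  ring

theorem cpair_sum_left {ι : Type*} (s : Finset ι) (x : ι → V) (α : V) :
    cpair (∑ i ∈ s, x i) α = ∑ i ∈ s, cpair (x i) α := by
  simp only [cpair, sum_inner, Finset.mul_sum, Finset.sum_div]

theorem cpair_self {α : V} (hα : α ≠ 0) : cpair α α = 2 :=
  mul_div_cancel_right₀ 2 (inner_self_ne_zero.mpr hα)

theorem cpair_add_smul_self {α : V} (hα : α ≠ 0) (x : V) (t : ℝ) :
    cpair (x + t • α) α = cpair x α + 2 * t := by
  rw [cpair_add_left, cpair_smul_left, cpair_self hα, mul_comm]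

theorem cpair_reflection {α : V} (hα : α ≠ 0) (x : V) :
    cpair (x - cpair x α • α) α = -cpair x α := by
  rw [sub_eq_add_neg, ← neg_smul, cpair_add_smul_self hα]
  ring

theorem cpair_mul_cpair_le_four {α β : V} (hα : α ≠ 0) (hβ : β ≠ 0) :
    cpair β α * cpair α β ≤ 4 := by
  have hαα : 0 < ⟪α, α⟫ := real_inner_self_pos.mpr hα
  have hββ : 0 < ⟪β, β⟫ := real_inner_self_pos.mpr hβ
  rw [cpair, cpair, real_inner_comm β α]
  rw [div_mul_div_comm, div_le_iff₀ (mul_pos hαα hββ)]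
  linarith [real_inner_mul_inner_self_le β α]

theorem cpair_neg_comm {α β : V} (h : cpair β α < 0) : cpair α β < 0 := by
  have hα : α ≠ 0 := by rintro rfl; simp [cpair] at h
  have hβ : β ≠ 0 := by rintro rfl; simp [cpair] at h
  have hαα : 0 < ⟪α, α⟫ := real_inner_self_pos.mpr hα
  have hββ : 0 < ⟪β, β⟫ := real_inner_self_pos.mpr hβ
  rw [cpair, div_lt_iff₀ hαα, zero_mul] at h
  rwa [cpair, real_inner_comm, div_lt_iff₀ hββ, zero_mul]

theorem add_eq_zero_of_cpair_eq_neg_two {α β : V} (hβα : cpair β α = -2)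
    (hαβ : cpair α β = -2) : β + α = 0 := by
  have hα : α ≠ 0 := by rintro rfl; simp [cpair] at hβα
  have hβ : β ≠ 0 := by rintro rfl; simp [cpair] at hαβ
  rw [cpair, div_eq_iff (inner_self_ne_zero.mpr hα)] at hβα
  rw [cpair, div_eq_iff (inner_self_ne_zero.mpr hβ), real_inner_comm] at hαβ
  rw [← inner_self_eq_zero (𝕜 := ℝ), real_inner_add_add_self]
  linarith

/-- A crystallographic root system that may be non-reduced, infinite, or fail to span `V`;
root strings are already unbroken in this generality. -/
structure IsCrystallographicRootSet (Φ : Set V) : Prop where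
  nonzero : ∀ α ∈ Φ, α ≠ 0
  reflection_mem : ∀ α ∈ Φ, ∀ β ∈ Φ, β - cpair β α • α ∈ Φ
  crystallographic : ∀ α ∈ Φ, ∀ β ∈ Φ, ∃ n : ℤ, cpair β α = (n : ℝ)

theorem IsRootSystem.isCrystallographicRootSet {Φ : Finset V} (hΦ : IsRootSystem Φ) :
    IsCrystallographicRootSet (Φ : Set V) :=
  ⟨hΦ.nonzero, hΦ.reflection_mem, hΦ.crystallographic⟩

namespace IsCrystallographicRootSet

variable {Φ : Set V} {α γ : V}

theorem add_eq_zero_or_mem_of_cpair_neg (hΦ : IsCrystallographicRootSet Φ) (hα : α ∈ Φ)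
    (hγ : γ ∈ Φ) (hneg : cpair γ α < 0) : γ + α = 0 ∨ γ + α ∈ Φ := by
  obtain ⟨k, hk⟩ := hΦ.crystallographic α hα γ hγ
  obtain ⟨l, hl⟩ := hΦ.crystallographic γ hγ α hα
  have hk_neg : k < 0 := by exact_mod_cast hk ▸ hneg
  have hl_neg : l < 0 := by exact_mod_cast hl ▸ cpair_neg_comm hneg
  have hkl : k * l ≤ 4 := by
    exact_mod_cast hk ▸ hl ▸ cpair_mul_cpair_le_four (hΦ.nonzero α hα) (hΦ.nonzero γ hγ)
  have hcases : k = -1 ∨ l = -1 ∨ k = -2 ∧ l = -2 := by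
    by_contra! h
    have hk_le : k ≤ -2 := by omega
    have hl_le : l ≤ -2 := by omega
    exact h.2.2 (by nlinarith) (by nlinarith)
  rcases hcases with rfl | rfl | ⟨rfl, rfl⟩
  · right
    simpa [hk] using hΦ.reflection_mem α hα γ hγ
  · right
    simpa [hl, add_comm] using hΦ.reflection_mem γ hγ α hα
  · left
    exact add_eq_zero_of_cpair_eq_neg_two (by simpa using hk) (by simpa using hl)

theorem add_natCast_smul_eq_zero_or_mem_of_two_mul_le (hΦ : IsCrystallographicRootSet Φ)
    (hα : α ∈ Φ) (hγ : γ ∈ Φ) {n : ℕ} (hn : 2 * (n : ℝ) ≤ -cpair γ α) :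
    γ + (n : ℝ) • α = 0 ∨ γ + (n : ℝ) • α ∈ Φ := by
  induction n with
  | zero => simp [hγ]
  | succ n ih =>
    push_cast at hn
    have hneg : cpair (γ + (n : ℝ) • α) α < 0 := by
      rw [cpair_add_smul_self (hΦ.nonzero α hα)]
      linarith
    rcases ih (by linarith) with h_zero | h_mem
    · simp [h_zero, cpair] at hneg
    · have hsucc : γ + ((n + 1 : ℕ) : ℝ) • α = γ + (n : ℝ) • α + α := by
        push_cast
        module
      rw [hsucc]
      exact hΦ.add_eq_zero_or_mem_of_cpair_neg hα h_mem hneg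

theorem add_natCast_smul_eq_zero_or_mem (hΦ : IsCrystallographicRootSet Φ) (hα : α ∈ Φ) (hγ : γ ∈ Φ)
    {n : ℕ} (hn : (n : ℝ) ≤ -cpair γ α) : γ + (n : ℝ) • α = 0 ∨ γ + (n : ℝ) • α ∈ Φ := by
  rcases le_total (2 * (n : ℝ)) (-cpair γ α) with h_first | h_second
  · exact hΦ.add_natCast_smul_eq_zero_or_mem_of_two_mul_le hα hγ h_first
  obtain ⟨m, hm⟩ : ∃ m : ℕ, (m : ℝ) = -cpair γ α - n := by
    obtain ⟨k, hk⟩ := hΦ.crystallographic α hα γ hγ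
    rw [hk] at hn ⊢
    obtain ⟨m, hm⟩ := Int.eq_ofNat_of_zero_le (a := -k - n) (by
      have : (n : ℤ) ≤ -k := by exact_mod_cast hn
      omega)
    exact ⟨m, by exact_mod_cast hm.symm⟩
  have hreflect : γ + (m : ℝ) • α - cpair (γ + (m : ℝ) • α) α • α = γ + (n : ℝ) • α := by
    rw [cpair_add_smul_self (hΦ.nonzero α hα), hm]
    module
  rw [← hreflect]
  rcases hΦ.add_natCast_smul_eq_zero_or_mem_of_two_mul_le hα hγ (n := m) (by linarith) with
    h_zero | h_mem
  · simp [h_zero, cpair]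
  · exact Or.inr (hΦ.reflection_mem α hα _ h_mem)

end IsCrystallographicRootSet

theorem exists_dual_eq_single_of_linearIndependent {K M ι : Type*} [Field K] [AddCommGroup M]
    [Module K M] {v : ι → M} (hv : LinearIndependent K v) (i : ι) :
    ∃ f : M →ₗ[K] K, ∀ j, f (v j) = (Pi.single i 1 : ι → K) j := by
  obtain ⟨f, hf⟩ := LinearMap.exists_extend ((Module.Basis.span hv).coord i)
  refine ⟨f, fun j => ?_⟩
  calc
    f (v j) = (Module.Basis.span hv).coord i (Module.Basis.span hv j) := by
      rw [← hf, Module.Basis.span_apply, LinearMap.comp_apply, Submodule.subtype_apply]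
    _ = (Pi.single i 1 : ι → K) j := by
      simp [Finsupp.single_apply, Pi.single_apply, eq_comm]

namespace IsBase

variable {Φ Δ : Finset V} {α β : V}

theorem mem_posRoots_of_apply_pos (hΔ : IsBase Φ Δ) (hβ : β ∈ Φ) {f : V →ₗ[ℝ] ℝ}
    (hf : ∀ a ∈ Δ, 0 ≤ f a) (hfβ : 0 < f β) : β ∈ posRoots Φ Δ := by
  refine Finset.mem_filter.mpr ⟨hβ, (hΔ.pos_neg β hβ).resolve_right ?_⟩
  rintro ⟨c, rfl⟩
  have hsum : 0 ≤ ∑ a ∈ Δ, (c a : ℝ) * f a :=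
    Finset.sum_nonneg fun a ha => mul_nonneg (Nat.cast_nonneg _) (hf a ha)
  simp only [map_neg, map_sum, map_smul, smul_eq_mul] at hfβ
  linarith

theorem exists_apply_pos_of_not_natCast_smul (hΔ : IsBase Φ Δ) (hα : α ∈ Δ) (hβ : β ∈ posRoots Φ Δ)
    (hβα : ¬∃ n : ℕ, β = (n : ℝ) • α) :
    ∃ f : V →ₗ[ℝ] ℝ, (∀ a ∈ Δ, 0 ≤ f a) ∧ f α = 0 ∧ 0 < f β := by
  obtain ⟨-, c, hc⟩ := Finset.mem_filter.mp hβ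
  obtain ⟨b, hb, hbα, hcb⟩ : ∃ b ∈ Δ, b ≠ α ∧ c b ≠ 0 := by
    by_contra! h
    refine hβα ⟨c α, hc.trans (Finset.sum_eq_single_of_mem α hα fun b hb hbα => ?_)⟩
    simp [h b hb hbα]
  obtain ⟨f, hf⟩ := exists_dual_eq_single_of_linearIndependent hΔ.indep ⟨b, hb⟩
  have hfb : f b = 1 := by simpa using hf ⟨b, hb⟩
  have hf_ne : ∀ a ∈ Δ, a ≠ b → f a = 0 := fun a ha hab => by
    simpa [hab] using hf ⟨a, ha⟩
  have hfβ : f β = c b := by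
    rw [hc, map_sum, Finset.sum_eq_single_of_mem b hb fun a ha hab => by simp [hf_ne a ha hab]]
    simp [hfb]
  refine ⟨f, fun a ha => ?_, hf_ne α hα hbα.symm, ?_⟩
  · rcases eq_or_ne a b with rfl | hab
    · simp [hfb]
    · simp [hf_ne a ha hab]
  · rw [hfβ]
    exact_mod_cast Nat.pos_of_ne_zero hcb

theorem reflection_mem_posRoots_of_not_natCast_smul (hΔ : IsBase Φ Δ)
    (hΦ : IsCrystallographicRootSet (Φ : Set V)) (hα : α ∈ Δ) (hβ : β ∈ posRoots Φ Δ)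
    (hβα : ¬∃ n : ℕ, β = (n : ℝ) • α) :
    β - cpair β α • α ∈ posRoots Φ Δ ∧ ¬∃ n : ℕ, β - cpair β α • α = (n : ℝ) • α := by
  obtain ⟨f, hf, hfα, hfβ⟩ := hΔ.exists_apply_pos_of_not_natCast_smul hα hβ hβα
  have hβΦ : β ∈ Φ := (Finset.mem_filter.mp hβ).1
  have hf_reflection : f (β - cpair β α • α) = f β := by simp [hfα]
  refine ⟨hΔ.mem_posRoots_of_apply_pos (hΦ.reflection_mem α (hΔ.subset hα) β hβΦ) hf
    (hf_reflection ▸ hfβ), ?_⟩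
  rintro ⟨n, hn⟩
  rw [hn, map_smul, hfα, smul_zero] at hf_reflection
  exact hfβ.ne hf_reflection

theorem sum_cpair_posRoots_not_natCast_smul (hΔ : IsBase Φ Δ)
    (hΦ : IsCrystallographicRootSet (Φ : Set V)) (hα : α ∈ Δ) :
    ∑ β ∈ posRoots Φ Δ with ¬∃ n : ℕ, β = (n : ℝ) • α, cpair β α = 0 := by
  have hα₀ : α ≠ 0 := hΦ.nonzero α (hΔ.subset hα)
  refine Finset.sum_involution (fun β _ => β - cpair β α • α) ?_ ?_ ?_ ?_
  · intro β _
    rw [cpair_reflection hα₀, add_neg_cancel]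
  · intro β _ hβ
    simpa [hα₀] using hβ
  · intro β hβ
    rw [Finset.mem_filter] at hβ ⊢
    exact hΔ.reflection_mem_posRoots_of_not_natCast_smul hΦ hα hβ.1 hβ.2
  · intro β _
    simp only [cpair_reflection hα₀]
    module

theorem exists_nat_cpair_weylVector (hΔ : IsBase Φ Δ)
    (hΦ : IsCrystallographicRootSet (Φ : Set V)) (hα : α ∈ Δ) :
    ∃ n : ℕ, cpair (weylVector Φ Δ) α = (n : ℝ) := by
  have hα₀ : α ≠ 0 := hΦ.nonzero α (hΔ.subset hα)
  have hmultiple : ∀ β ∈ {β ∈ posRoots Φ Δ | ∃ n : ℕ, β = (n : ℝ) • α},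
      ∃ n : ℕ, cpair β α = 2 * (n : ℝ) := by
    intro β hβ
    obtain ⟨n, rfl⟩ := (Finset.mem_filter.mp hβ).2
    exact ⟨n, by rw [cpair_smul_left, cpair_self hα₀, mul_comm]⟩
  choose! n hn using hmultiple
  refine ⟨∑ β ∈ posRoots Φ Δ with ∃ n : ℕ, β = (n : ℝ) • α, n β, ?_⟩
  rw [weylVector, cpair_smul_left, cpair_sum_left,
    ← Finset.sum_filter_add_sum_filter_not _ (fun β => ∃ n : ℕ, β = (n : ℝ) • α),
    hΔ.sum_cpair_posRoots_not_natCast_smul hΦ hα, Finset.sum_congr rfl hn, ← Finset.mul_sum]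
  push_cast
  ring

end IsBase

theorem statement17_general {Φ Δ : Finset V} (hΦ : IsCrystallographicRootSet (Φ : Set V))
    (hΔ : IsBase Φ Δ) {α : V} (hα : α ∈ Δ) {μ : V} (hμ : ∃ n : ℕ, cpair μ α = (n : ℝ))
    {γ : V} (hγ : γ ∈ Φ) (hle : cpair (weylVector Φ Δ + μ + γ) α ≤ 0) :
    γ + (-(cpair (weylVector Φ Δ + μ + γ) α)) • α = 0 ∨
      γ + (-(cpair (weylVector Φ Δ + μ + γ) α)) • α ∈ Φ := by
  have hαΦ : α ∈ (Φ : Set V) := hΔ.subset hα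
  obtain ⟨r, hr⟩ := hΔ.exists_nat_cpair_weylVector hΦ hα
  obtain ⟨m, hm⟩ := hμ
  obtain ⟨k, hk⟩ := hΦ.crystallographic α hαΦ γ hγ
  have hpair : cpair (weylVector Φ Δ + μ + γ) α = ((r + m + k : ℤ) : ℝ) := by
    rw [cpair_add_left, cpair_add_left, hr, hm, hk]
    push_cast
    ring
  rw [hpair] at hle ⊢
  have hle' : (r + m + k : ℤ) ≤ 0 := by exact_mod_cast hle
  obtain ⟨p, hp⟩ := Int.eq_ofNat_of_zero_le (neg_nonneg.mpr hle')
  have hp' : -((r + m + k : ℤ) : ℝ) = p := by exact_mod_cast hp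
  have hp_le : (p : ℝ) ≤ -cpair γ α := by
    rw [hk]
    exact_mod_cast (by omega : (p : ℤ) ≤ -k)
  rw [hp']
  exact hΦ.add_natCast_smul_eq_zero_or_mem hαΦ hγ hp_le

end

/-- Let `μ` be a dominant integral weight, `γ ∈ Φ`, and suppose the
simple root `αj ∈ Δ` satisfies `⟨ρ + μ + γ, αj∨⟩ = -p < 0`.  Then `β := γ + p·αj` is
either zero or a root of `Φ`. -/
theorem statement17 {Φ Δ : Finset E} (hΦ : IsRootSystem Φ) (hΔ : IsBase Φ Δ)
    {μ : E} (hμ : ∀ a ∈ Δ, ∃ n : ℕ, cpair μ a = (n : ℝ))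
    {γ : E} (hγ : γ ∈ Φ) {αj : E} (hαj : αj ∈ Δ)
    (hneg : cpair (weylVector Φ Δ + μ + γ) αj < 0) :
    γ + (-(cpair (weylVector Φ Δ + μ + γ) αj)) • αj = 0 ∨
      γ + (-(cpair (weylVector Φ Δ + μ + γ) αj)) • αj ∈ Φ :=
  statement17_general hΦ.isCrystallographicRootSet hΔ hαj (hμ αj hαj) hγ hneg.le

end RootPaper
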